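/- Let A be an essential line arrangement of d ≥ 2 lines in P^2 having only double and triple intersection points (n_j(A) = 0 for all j ≥ 4), with n_3 = n_3(A) triple points. Then: (1) if n_3 = 0, then r(A) = d − 2; (2) if 1 ≤ n_3 ≤ 3, then r(A) = d − 3. -/

import Mathlib

open Classical MvPolynomial

variable {K : Type*} [Field K] [CharZero K] {ℓ : ℕ}

/-- A (central) hyperplane arrangement: a finite set of nonzero linear forms,
pairwise non-proportional. -/
def IsArrangement (A : Finset (MvPolynomial (Fin ℓ) K)) : Prop :=
  (∀ α ∈ A, α ≠ 0 ∧ α.IsHomogeneous 1) ∧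
    ∀ α ∈ A, ∀ β ∈ A, α ≠ β → ∀ c : K, α ≠ c • β

/-- The arrangement is essential: the common zero set of its forms is `{0}`. -/
def IsEssential (A : Finset (MvPolynomial (Fin ℓ) K)) : Prop :=
  ∀ v : Fin ℓ → K, (∀ α ∈ A, eval v α = 0) → v = 0

/-- The defining polynomial `Q(A)`. -/
noncomputable def Qpoly (A : Finset (MvPolynomial (Fin ℓ) K)) : MvPolynomial (Fin ℓ) K :=
  ∏ α ∈ A, α

/-- Apply a derivation `θ = Σ θ_j ∂_j` to a polynomial. -/
noncomputable def applyDer (θ : Fin ℓ → MvPolynomial (Fin ℓ) K)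
    (f : MvPolynomial (Fin ℓ) K) : MvPolynomial (Fin ℓ) K :=
  ∑ j, θ j * pderiv j f

/-- The minimal degree of a Jacobian relation `r(A)`. -/
noncomputable def mdr (A : Finset (MvPolynomial (Fin ℓ) K)) : ℕ :=
  sInf {r | ∃ θ : Fin ℓ → MvPolynomial (Fin ℓ) K, θ ≠ 0 ∧
    (∀ j, (θ j).IsHomogeneous r) ∧ applyDer θ (Qpoly A) = 0}

/-- The number of elements `|A^H|` of the restriction of `A` to `H`:
the number of distinct subspaces `H ∩ ker α_L`, `L ∈ A \ {H}`. -/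
noncomputable def restCard (A : Finset (MvPolynomial (Fin ℓ) K))
    (H : MvPolynomial (Fin ℓ) K) : ℕ :=
  ((A.erase H).image fun L => {v : Fin ℓ → K | eval v H = 0 ∧ eval v L = 0}).card

/-- The number `n_j(A)` of intersection points of multiplicity `j` of a line
arrangement `A` in `P^2`. An intersection point is encoded (bijectively) by the set
of lines of `A` passing through it, which has at least two elements. -/
noncomputable def nPoints (A : Finset (MvPolynomial (Fin 3) K)) (j : ℕ) : ℕ :=
  Set.ncard {T : Finset (MvPolynomial (Fin 3) K) |
    ∃ v : Fin 3 → K, v ≠ 0 ∧ T = A.filter (fun α => eval v α = 0) ∧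
      2 ≤ T.card ∧ T.card = j}

/-- The maximal multiplicity `m(A)` of an intersection point of `A`. -/
noncomputable def maxMult (A : Finset (MvPolynomial (Fin 3) K)) : ℕ :=
  sSup {j | 2 ≤ j ∧ nPoints A j ≠ 0}

/-- The global Tjurina number `τ(A) = Σ_{j ≥ 2} n_j(A)·(j−1)²` of a line arrangement. -/
noncomputable def tjurina (A : Finset (MvPolynomial (Fin 3) K)) : ℕ :=
  ∑ j ∈ Finset.range (A.card + 1), nPoints A j * (j - 1) ^ 2

/-- `τ(d,r)_max = (d−1)(d−r−1) + r² − C(2r−d+2, 2)`, for `d/2 ≤ r ≤ d−1`. -/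
def tauMax (d r : ℕ) : ℕ :=
  (d - 1) * (d - r - 1) + r ^ 2 - Nat.choose (2 * r - d + 2) 2

/-- A line arrangement `A` is maximal Tjurina of type `(d, r)` if it consists of `d`
lines, `r(A) = r` and `τ(A) = τ(d,r)_max`. -/
def IsMaxTjurina (A : Finset (MvPolynomial (Fin 3) K)) (d r : ℕ) : Prop :=
  A.card = d ∧ mdr A = r ∧ tjurina A = tauMax d r

/-! If `θ` is a Jacobian relation of degree `e`, then `θ` is tangent to every line of `A`. At the
intersection of two lines it is therefore proportional to the Euler field `X`, so the vector
`X × θ`, which has degree `e + 1`, vanishes at every intersection point. A line with more than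
`e + 1` intersection points must then divide `X × θ`. If there are more than `e` such lines, then
`X × θ` is a constant vector times a product of lines; as it is orthogonal to `X` it vanishes, and
`θ` is a multiple of `X` killing `Q(A)`, that is, zero. Conversely, a point of multiplicity `m`
carries a Jacobian relation of degree `d - m`. The two bounds meet as soon as at most `m` lines
have at most `d - m` intersection points, which for double and triple points means that at most
three lines contain two or more triple points; three triple points span at most three lines. -/

open scoped Matrix

section LinearForms

variable {σ R : Type*} [CommSemiring R] {α : MvPolynomial σ R}

theorem exists_linearMap_eq_eval (hα : α.IsHomogeneous 1) :
    ∃ f : (σ → R) →ₗ[R] R, ∀ v, f v = eval v α := by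
  rw [← mem_homogeneousSubmodule, homogeneousSubmodule_one_eq_span_X] at hα
  induction hα using Submodule.span_induction with
  | mem p hp =>
    obtain ⟨i, rfl⟩ := hp
    exact ⟨LinearMap.proj i, by simp⟩
  | zero => exact ⟨0, by simp⟩
  | add p q _ _ hp hq =>
    obtain ⟨⟨f, hf⟩, ⟨g, hg⟩⟩ := And.intro hp hq
    exact ⟨f + g, by simp [hf, hg]⟩
  | smul c p _ hp =>
    obtain ⟨f, hf⟩ := hp
    exact ⟨c • f, by simp [hf]⟩

theorem eval_smul_of_isHomogeneous_one (hα : α.IsHomogeneous 1) (c : R) (v : σ → R) :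
    eval (c • v) α = c * eval v α := by
  obtain ⟨f, hf⟩ := exists_linearMap_eq_eval hα
  simp only [← hf, map_smul, smul_eq_mul]

/-- The coefficient vector of a linear form, used to see linear forms in three variables as
vectors of `R³` and so apply the cross product to them. -/
noncomputable def coeffVec (α : MvPolynomial σ R) : σ → R :=
  fun i => coeff (Finsupp.single i 1) α

theorem pderiv_eq_C_coeffVec (hα : α.IsHomogeneous 1) (i : σ) :
    pderiv i α = C (coeffVec α i) := by
  have hconst : (pderiv i α).totalDegree = 0 := (totalDegree_zero_iff_isHomogeneous σ).mpr hα.pderiv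
  rw [totalDegree_eq_zero_iff_eq_C.mp hconst]
  simp [coeffVec, coeff_pderiv]

variable [Fintype σ]

theorem sum_C_coeffVec_mul_X (hα : α.IsHomogeneous 1) : ∑ i, C (coeffVec α i) * X i = α := by
  simpa only [pderiv_eq_C_coeffVec hα, mul_comm (X _), one_smul] using hα.sum_X_mul_pderiv

theorem eval_eq_coeffVec_dotProduct (hα : α.IsHomogeneous 1) (v : σ → R) :
    eval v α = coeffVec α ⬝ᵥ v := by
  conv_lhs => rw [← sum_C_coeffVec_mul_X hα]
  simp [dotProduct]

theorem eq_zero_of_sum_X_mul_C_eq_zero {c : σ → R}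
    (h : ∑ i, (X i * C (c i) : MvPolynomial σ R) = 0) : c = 0 := by
  funext i
  simpa [Pi.single_apply] using congrArg (eval (Pi.single i 1)) h

end LinearForms

theorem isHomogeneous_prod_of_isHomogeneous_one {σ R ι : Type*} [CommSemiring R] {s : Finset ι}
    {β : ι → MvPolynomial σ R} (hβ : ∀ i ∈ s, (β i).IsHomogeneous 1) :
    (∏ i ∈ s, β i).IsHomogeneous s.card := by
  simpa using IsHomogeneous.prod s β (fun _ => 1) hβ

section KernelProjection

variable {σ R : Type*} [CommRing R] {α p : MvPolynomial σ R}

/-- Substitution of `v - α(v) e` for the variable point `v`. When `α` is a linear form with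
`α(e) = 1`, this is the pullback of polynomials along the projection onto `ker α` parallel to `e`,
and it identifies the polynomials modulo `α` with those that are constant along `e`. -/
noncomputable def kerProj (α : MvPolynomial σ R) (e : σ → R) :
    MvPolynomial σ R →ₐ[R] MvPolynomial σ R :=
  aeval fun i => X i - C (e i) * α

theorem eval_kerProj (α : MvPolynomial σ R) (e v : σ → R) (p : MvPolynomial σ R) :
    eval v (kerProj α e p) = eval (v - eval v α • e) p := by
  rw [kerProj, ← coe_aeval_eq_eval, ← coe_aeval_eq_eval, RingHom.coe_coe, RingHom.coe_coe,
    ← AlgHom.comp_apply, comp_aeval]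
  congr 2
  ext i
  simp [mul_comm]

theorem dvd_kerProj_sub (α : MvPolynomial σ R) (e : σ → R) (p : MvPolynomial σ R) :
    α ∣ kerProj α e p - p := by
  rw [← Ideal.mem_span_singleton, ← Ideal.Quotient.eq]
  have hmk : (Ideal.Quotient.mkₐ R (Ideal.span {α})).comp (kerProj α e) =
      Ideal.Quotient.mkₐ R (Ideal.span {α}) := by
    ext i
    simp [kerProj, Ideal.Quotient.eq_zero_iff_mem.mpr (Ideal.mem_span_singleton_self α)]
  exact DFunLike.congr_fun hmk p

theorem dvd_of_kerProj_eq_zero {e : σ → R} (h : kerProj α e p = 0) : α ∣ p := by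
  simpa [h] using dvd_kerProj_sub α e p

theorem isHomogeneous_kerProj {m : ℕ} (hα : α.IsHomogeneous 1) (e : σ → R)
    (hp : p.IsHomogeneous m) : (kerProj α e p).IsHomogeneous m := by
  rw [← one_mul m]
  exact hp.aeval _ fun i => (isHomogeneous_X R i).sub (hα.C_mul (e i))

theorem eval_sub_eval_smul (hα : α.IsHomogeneous 1) {e : σ → R} (he : eval e α = 1)
    (v : σ → R) : eval (v - eval v α • e) α = 0 := by
  obtain ⟨f, hf⟩ := exists_linearMap_eq_eval hα
  simp only [← hf, map_sub, map_smul, smul_eq_mul] at he ⊢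
  rw [he, mul_one, sub_self]

end KernelProjection

section Divisibility

variable {σ F : Type*} [Field F] {α p q : MvPolynomial σ F} {m n : ℕ}

theorem irreducible_of_isHomogeneous_one (hα : α.IsHomogeneous 1) (hα0 : α ≠ 0) :
    Irreducible α := by
  refine irreducible_of_totalDegree_eq_one (hα.totalDegree hα0) fun x hx => ?_
  rw [isUnit_iff_ne_zero]
  rintro rfl
  exact hα0 (ext _ _ fun i => by simpa using hx i)

theorem isRelPrime_of_eval_ne_zero (hα : α.IsHomogeneous 1) (hα0 : α ≠ 0) {v : σ → F}
    (hv : eval v α = 0) (hpv : eval v p ≠ 0) : IsRelPrime α p := by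
  rw [(irreducible_of_isHomogeneous_one hα hα0).isRelPrime_iff_not_dvd]
  exact fun hdvd => hpv (zero_dvd_iff.mp (hv ▸ map_dvd (eval v) hdvd))

theorem le_of_isHomogeneous_of_dvd (hp : p.IsHomogeneous m) (hq : q.IsHomogeneous n)
    (hq0 : q ≠ 0) (hdvd : p ∣ q) : m ≤ n := by
  rw [← hp.totalDegree (ne_zero_of_dvd_ne_zero hq0 hdvd), ← hq.totalDegree hq0]
  exact totalDegree_le_of_dvd_of_isDomain hdvd hq0

theorem exists_eq_C_mul_of_isHomogeneous_of_dvd (hp : p.IsHomogeneous m) (hq : q.IsHomogeneous n)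
    (hnm : n ≤ m) (hdvd : p ∣ q) : ∃ c : F, q = C c * p := by
  obtain rfl | hq0 := eq_or_ne q 0
  · exact ⟨0, by simp⟩
  obtain ⟨w, rfl⟩ := hdvd
  have hdeg := totalDegree_mul_of_isDomain (left_ne_zero_of_mul hq0) (right_ne_zero_of_mul hq0)
  rw [hq.totalDegree hq0, hp.totalDegree (left_ne_zero_of_mul hq0)] at hdeg
  have hw : w = C (coeff 0 w) := totalDegree_eq_zero_iff_eq_C.mp (by omega)
  exact ⟨coeff 0 w, by rw [← hw, mul_comm]⟩

variable [Infinite F]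

theorem exists_eval_eq_one (hα : α.IsHomogeneous 1) (hα0 : α ≠ 0) :
    ∃ e : σ → F, eval e α = 1 := by
  obtain ⟨v, hv⟩ : ∃ v : σ → F, eval v α ≠ 0 := by
    by_contra! h
    exact hα0 (MvPolynomial.funext fun v => by simpa using h v)
  exact ⟨(eval v α)⁻¹ • v, by rw [eval_smul_of_isHomogeneous_one hα, inv_mul_cancel₀ hv]⟩

theorem dvd_of_forall_eval_eq_zero (hα : α.IsHomogeneous 1)
    (hp : ∀ v, eval v α = 0 → eval v p = 0) : α ∣ p := by
  obtain rfl | hα0 := eq_or_ne α 0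
  · exact zero_dvd_iff.mpr (MvPolynomial.funext fun v => by simpa using hp v)
  obtain ⟨e, he⟩ := exists_eval_eq_one hα hα0
  refine dvd_of_kerProj_eq_zero (e := e) (MvPolynomial.funext fun v => ?_)
  rw [eval_kerProj, map_zero]
  exact hp _ (eval_sub_eval_smul hα he v)

/- Pulled back along a projection onto `ker α`, the polynomial `p` becomes divisible by the
pullbacks of the forms `β i`, which are pairwise coprime: too many factors for its degree. -/
theorem dvd_of_forall_eval_eq_zero_of_card_lt {ι : Type*} {s : Finset ι}
    {β : ι → MvPolynomial σ F} (hα : α.IsHomogeneous 1) (hα0 : α ≠ 0)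
    (hβ : ∀ i ∈ s, (β i).IsHomogeneous 1) (hp : p.IsHomogeneous m) (hs : m < s.card)
    (hsep : ∀ i ∈ s, ∀ j ∈ s, i ≠ j →
      ∃ v, eval v α = 0 ∧ eval v (β i) = 0 ∧ eval v (β j) ≠ 0)
    (hvan : ∀ i ∈ s, ∀ v, eval v α = 0 → eval v (β i) = 0 → eval v p = 0) : α ∣ p := by
  obtain ⟨e, he⟩ := exists_eval_eq_one hα hα0
  have hform : ∀ i ∈ s, (kerProj α e (β i)).IsHomogeneous 1 :=
    fun i hi => isHomogeneous_kerProj hα e (hβ i hi)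
  have hsep' : ∀ i ∈ s, ∀ j ∈ s, i ≠ j →
      ∃ v, eval v (kerProj α e (β i)) = 0 ∧ eval v (kerProj α e (β j)) ≠ 0 := by
    intro i hi j hj hij
    obtain ⟨v, hvα, hvi, hvj⟩ := hsep i hi j hj hij
    exact ⟨v, by simpa [eval_kerProj, hvα] using hvi, by simpa [eval_kerProj, hvα] using hvj⟩
  have hcoprime : (s : Set ι).Pairwise (Function.onFun IsRelPrime fun i => kerProj α e (β i)) := by
    intro i hi j hj hij
    obtain ⟨v, hvi, hvj⟩ := hsep' i hi j hj hij
    obtain ⟨w, -, hwi⟩ := hsep' j hj i hi hij.symm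
    have hi0 : kerProj α e (β i) ≠ 0 := fun h => hwi (by rw [h, map_zero])
    exact isRelPrime_of_eval_ne_zero (hform i hi) hi0 hvi hvj
  have hdvd : ∀ i ∈ s, kerProj α e (β i) ∣ kerProj α e p := by
    refine fun i hi => dvd_of_forall_eval_eq_zero (hform i hi) fun v hv => ?_
    rw [eval_kerProj] at hv ⊢
    exact hvan i hi _ (eval_sub_eval_smul hα he v) hv
  refine dvd_of_kerProj_eq_zero (e := e) ?_
  by_contra hne
  exact hs.not_ge <| le_of_isHomogeneous_of_dvd (isHomogeneous_prod_of_isHomogeneous_one hform)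
    (isHomogeneous_kerProj hα e hp) hne (Finset.prod_dvd_of_isRelPrime hcoprime hdvd)

end Divisibility

section Derivations

variable {F : Type*} [Field F] {θ : Fin ℓ → MvPolynomial (Fin ℓ) F}
  {f g : MvPolynomial (Fin ℓ) F}

theorem applyDer_mul (θ : Fin ℓ → MvPolynomial (Fin ℓ) F) (f g : MvPolynomial (Fin ℓ) F) :
    applyDer θ (f * g) = f * applyDer θ g + g * applyDer θ f := by
  simp only [applyDer, pderiv_mul, Finset.mul_sum, ← Finset.sum_add_distrib]
  exact Finset.sum_congr rfl fun i _ => by ring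

theorem applyDer_prod_eq_zero {s : Finset (MvPolynomial (Fin ℓ) F)}
    (hs : ∀ α ∈ s, applyDer θ α = 0) : applyDer θ (∏ α ∈ s, α) = 0 := by
  refine Finset.prod_induction _ (fun f => applyDer θ f = 0) (fun f g hf hg => ?_) ?_ hs
  · rw [applyDer_mul, hf, hg, mul_zero, mul_zero, add_zero]
  · simp [applyDer]

theorem applyDer_X_of_isHomogeneous {n : ℕ} (hf : f.IsHomogeneous n) : applyDer X f = n * f := by
  rw [applyDer, hf.sum_X_mul_pderiv, nsmul_eq_mul]

theorem eval_applyDer_of_isHomogeneous_one {α : MvPolynomial (Fin ℓ) F} (hα : α.IsHomogeneous 1)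
    (θ : Fin ℓ → MvPolynomial (Fin ℓ) F) (v : Fin ℓ → F) :
    eval v (applyDer θ α) = eval (fun i => eval v (θ i)) α := by
  simp [applyDer, pderiv_eq_C_coeffVec hα, eval_eq_coeffVec_dotProduct hα, dotProduct, mul_comm]

theorem applyDer_const_of_isHomogeneous_one {α : MvPolynomial (Fin ℓ) F} (hα : α.IsHomogeneous 1)
    (v : Fin ℓ → F) : applyDer (C ∘ v) α = C (eval v α) := by
  simp [applyDer, pderiv_eq_C_coeffVec hα, eval_eq_coeffVec_dotProduct hα, dotProduct, mul_comm]

theorem isHomogeneous_applyDer_const_mul_X {n : ℕ} (hf : f.IsHomogeneous n) (v : Fin ℓ → F)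
    (i : Fin ℓ) : (applyDer (C ∘ v) f * X i).IsHomogeneous n := by
  obtain _ | n := n
  · rw [totalDegree_eq_zero_iff_eq_C.mp ((totalDegree_zero_iff_isHomogeneous _).mpr hf)]
    simpa [applyDer] using isHomogeneous_zero _ _ _
  · exact (IsHomogeneous.sum _ _ n fun j _ => hf.pderiv.C_mul (v j)).mul (isHomogeneous_X F i)

/- If `θ` is pointwise proportional to the Euler field `X`, then `X i * θ(f) = θ i * X(f)`. -/
theorem eq_zero_of_applyDer_eq_zero_of_X_mul_comm [CharZero F] {n : ℕ} (hf : f.IsHomogeneous n)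
    (hf0 : f ≠ 0) (hn : n ≠ 0) (hθf : applyDer θ f = 0)
    (hθX : ∀ i j, X i * θ j = X j * θ i) : θ = 0 := by
  funext i
  have hEuler : θ i * (n * f) = 0 := by
    calc θ i * (n * f) = ∑ j, θ i * (X j * pderiv j f) := by
          rw [← applyDer_X_of_isHomogeneous hf, applyDer, Finset.mul_sum]
      _ = ∑ j, X i * (θ j * pderiv j f) :=
          Finset.sum_congr rfl fun j _ => by linear_combination pderiv j f * hθX j i
      _ = X i * applyDer θ f := by rw [applyDer, Finset.mul_sum]
      _ = 0 := by rw [hθf, mul_zero]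
  simpa [hn, hf0] using hEuler

end Derivations

section Arrangements

variable {F : Type*} [Field F] {A : Finset (MvPolynomial (Fin ℓ) F)}
  {α β : MvPolynomial (Fin ℓ) F} {v : Fin ℓ → F}

namespace IsArrangement

theorem isRelPrime (hA : IsArrangement A) (hα : α ∈ A) (hβ : β ∈ A) (hne : α ≠ β) :
    IsRelPrime α β := by
  obtain ⟨hα0, hα1⟩ := hA.1 α hα
  rw [(irreducible_of_isHomogeneous_one hα1 hα0).isRelPrime_iff_not_dvd]
  intro hdvd
  obtain ⟨c, hc⟩ := exists_eq_C_mul_of_isHomogeneous_of_dvd hα1 (hA.1 β hβ).2 le_rfl hdvd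
  exact hA.2 β hβ α hα hne.symm c (by rw [hc, smul_eq_C_mul])

theorem isHomogeneous_prod (hA : IsArrangement A) {s : Finset (MvPolynomial (Fin ℓ) F)}
    (hs : s ⊆ A) : (∏ α ∈ s, α).IsHomogeneous s.card :=
  isHomogeneous_prod_of_isHomogeneous_one fun α hα => (hA.1 α (hs hα)).2

theorem prod_ne_zero (hA : IsArrangement A) {s : Finset (MvPolynomial (Fin ℓ) F)} (hs : s ⊆ A) :
    ∏ α ∈ s, α ≠ 0 :=
  Finset.prod_ne_zero_iff.mpr fun α hα => (hA.1 α (hs hα)).1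

theorem dvd_applyDer (hA : IsArrangement A) {θ : Fin ℓ → MvPolynomial (Fin ℓ) F}
    (hθ : applyDer θ (Qpoly A) = 0) (hα : α ∈ A) : α ∣ applyDer θ α := by
  rw [Qpoly, ← Finset.mul_prod_erase A _ hα, applyDer_mul] at hθ
  have hcoprime : IsRelPrime α (∏ β ∈ A.erase α, β) := by
    refine IsRelPrime.prod_right fun β hβ => ?_
    obtain ⟨hne, hβ⟩ := Finset.mem_erase.mp hβ
    exact hA.isRelPrime hα hβ hne.symm
  exact hcoprime.dvd_of_dvd_mul_left
    ((dvd_add_right (dvd_mul_right _ _)).mp (hθ ▸ dvd_zero α))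

theorem eval_applyDer_eq_zero (hA : IsArrangement A) {θ : Fin ℓ → MvPolynomial (Fin ℓ) F}
    (hθ : applyDer θ (Qpoly A) = 0) (hα : α ∈ A) (hv : eval v α = 0) :
    eval (fun i => eval v (θ i)) α = 0 := by
  rw [← eval_applyDer_of_isHomogeneous_one (hA.1 α hα).2]
  exact zero_dvd_iff.mp (hv ▸ map_dvd (eval v) (hA.dvd_applyDer hθ hα))

end IsArrangement

/-- The hyperplanes of `A` through the point `v`. -/
noncomputable def hyperplanesThrough (A : Finset (MvPolynomial (Fin ℓ) F)) (v : Fin ℓ → F) :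
    Finset (MvPolynomial (Fin ℓ) F) :=
  A.filter fun α => eval v α = 0

theorem mem_hyperplanesThrough : α ∈ hyperplanesThrough A v ↔ α ∈ A ∧ eval v α = 0 :=
  Finset.mem_filter

theorem hyperplanesThrough_subset : hyperplanesThrough A v ⊆ A :=
  Finset.filter_subset _ _

theorem IsArrangement.hyperplanesThrough_smul (hA : IsArrangement A) {c : F} (hc : c ≠ 0) :
    hyperplanesThrough A (c • v) = hyperplanesThrough A v :=
  Finset.filter_congr fun α hα => by simp [eval_smul_of_isHomogeneous_one (hA.1 α hα).2, hc]

end Arrangements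

section PointRelation

variable {F : Type*} [Field F] {A : Finset (MvPolynomial (Fin ℓ) F)} {v : Fin ℓ → F}

/-- The product of the forms of `A` that do not vanish at `v`, that is, of the factors of `Q(A)`
that are not killed by `∂_v`. -/
noncomputable def residualPoly (A : Finset (MvPolynomial (Fin ℓ) F)) (v : Fin ℓ → F) :
    MvPolynomial (Fin ℓ) F :=
  ∏ α ∈ A \ hyperplanesThrough A v, α

/-- The Jacobian relation `d h ∂_v - ∂_v(h) E` attached to a point `v`, where `d` is the number of
hyperplanes, `h` the residual polynomial and `E` the Euler field. The second term is what corrects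
`∂_v`, which kills the forms through `v`, into a derivation that kills all of `Q(A)`. -/
noncomputable def pointRelation (A : Finset (MvPolynomial (Fin ℓ) F)) (v : Fin ℓ → F) :
    Fin ℓ → MvPolynomial (Fin ℓ) F :=
  (A.card * residualPoly A v) • (C ∘ v) - applyDer (C ∘ v) (residualPoly A v) • X

namespace IsArrangement

theorem isHomogeneous_residualPoly (hA : IsArrangement A) (v : Fin ℓ → F) :
    (residualPoly A v).IsHomogeneous (A.card - (hyperplanesThrough A v).card) := by
  rw [← Finset.card_sdiff_of_subset hyperplanesThrough_subset]
  exact hA.isHomogeneous_prod Finset.sdiff_subset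

theorem applyDer_const_Qpoly (hA : IsArrangement A) (v : Fin ℓ → F) :
    residualPoly A v * applyDer (C ∘ v) (Qpoly A) =
      applyDer (C ∘ v) (residualPoly A v) * Qpoly A := by
  have hker : applyDer (C ∘ v) (∏ α ∈ hyperplanesThrough A v, α) = 0 := by
    refine applyDer_prod_eq_zero fun α hα => ?_
    obtain ⟨hα, hvα⟩ := mem_hyperplanesThrough.mp hα
    rw [applyDer_const_of_isHomogeneous_one (hA.1 α hα).2, hvα, C_0]
  rw [Qpoly, ← Finset.prod_sdiff (hyperplanesThrough_subset (A := A) (v := v)), ← residualPoly,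
    applyDer_mul, hker]
  ring

theorem applyDer_pointRelation (hA : IsArrangement A) (v : Fin ℓ → F) :
    applyDer (pointRelation A v) (Qpoly A) = 0 := by
  have hsplit : applyDer (pointRelation A v) (Qpoly A) =
      A.card * residualPoly A v * applyDer (C ∘ v) (Qpoly A) -
        applyDer (C ∘ v) (residualPoly A v) * applyDer X (Qpoly A) := by
    simp only [applyDer, pointRelation, Pi.sub_apply, Pi.smul_apply, smul_eq_mul, sub_mul,
      Finset.sum_sub_distrib, Finset.mul_sum, mul_assoc]
  have hEuler := applyDer_X_of_isHomogeneous (hA.isHomogeneous_prod subset_rfl)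
  rw [← Qpoly] at hEuler
  rw [hsplit, hEuler]
  linear_combination (A.card : MvPolynomial (Fin ℓ) F) * hA.applyDer_const_Qpoly v

theorem isHomogeneous_pointRelation (hA : IsArrangement A) (v : Fin ℓ → F) (i : Fin ℓ) :
    (pointRelation A v i).IsHomogeneous (A.card - (hyperplanesThrough A v).card) := by
  have hh := hA.isHomogeneous_residualPoly v
  have hterm := hh.C_mul (A.card * v i)
  convert! hterm.sub (isHomogeneous_applyDer_const_mul_X hh v i) using 1
  simp only [pointRelation, Pi.sub_apply, Pi.smul_apply, Function.comp_apply, smul_eq_mul, C_mul,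
    map_natCast]
  ring

theorem pointRelation_ne_zero [CharZero F] [Nontrivial (Fin ℓ)] (hA : IsArrangement A)
    (hne : A.Nonempty) (hv : v ≠ 0) : pointRelation A v ≠ 0 := by
  intro hzero
  obtain ⟨k, hk⟩ := Function.ne_iff.mp hv
  obtain ⟨l, hl⟩ := exists_ne k
  have hcoord (i : Fin ℓ) : (A.card : MvPolynomial (Fin ℓ) F) * residualPoly A v * C (v i) =
      applyDer (C ∘ v) (residualPoly A v) * X i := sub_eq_zero.mp (congrFun hzero i)
  have hminor : ((A.card : MvPolynomial (Fin ℓ) F) * residualPoly A v) *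
      (C (v k) * X l - C (v l) * X k) = 0 := by
    linear_combination X l * hcoord k - X k * hcoord l
  have hres : residualPoly A v ≠ 0 := hA.prod_ne_zero Finset.sdiff_subset
  have hlin : C (v k) * X l - C (v l) * X k = (0 : MvPolynomial (Fin ℓ) F) := by
    simpa [hres, hne.ne_empty] using hminor
  apply hk
  simpa [hl.symm] using congrArg (eval (Pi.single l 1)) hlin

end IsArrangement

end PointRelation

section Incidence

variable {F : Type*} [Field F]

theorem exists_smul_eq_of_cross_eq_zero {v w : Fin 3 → F} (hv : v ≠ 0) (h : v ⨯₃ w = 0) :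
    ∃ c : F, c • v = w := by
  have hdep : ¬LinearIndependent F ![v, w] :=
    fun hvw => crossProduct_ne_zero_iff_linearIndependent.mpr hvw h
  simpa [LinearIndependent.pair_iff' hv] using hdep

theorem cross_eq_zero_of_dotProduct_eq_zero {a b v w : Fin 3 → F} (hab : a ⨯₃ b ≠ 0)
    (hav : a ⬝ᵥ v = 0) (haw : a ⬝ᵥ w = 0) (hbv : b ⬝ᵥ v = 0) (hbw : b ⬝ᵥ w = 0) :
    v ⨯₃ w = 0 := by
  by_contra hvw
  have hparallel {x : Fin 3 → F} (hxv : x ⬝ᵥ v = 0) (hxw : x ⬝ᵥ w = 0) :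
      ∃ c : F, c • (v ⨯₃ w) = x := by
    refine exists_smul_eq_of_cross_eq_zero hvw ?_
    rw [cross_cross_eq_smul_sub_smul, dotProduct_comm v, dotProduct_comm w, hxv, hxw, zero_smul,
      zero_smul, sub_self]
  obtain ⟨s, rfl⟩ := hparallel hav haw
  obtain ⟨t, rfl⟩ := hparallel hbv hbw
  simp at hab

variable {A : Finset (MvPolynomial (Fin 3) F)} {α β : MvPolynomial (Fin 3) F} {v w : Fin 3 → F}

namespace IsArrangement

theorem cross_coeffVec_ne_zero (hA : IsArrangement A) (hα : α ∈ A) (hβ : β ∈ A) (hne : α ≠ β) :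
    coeffVec α ⨯₃ coeffVec β ≠ 0 := by
  obtain ⟨hα0, hα1⟩ := hA.1 α hα
  have hβ1 := (hA.1 β hβ).2
  intro hcross
  have hcoeff : coeffVec α ≠ 0 := fun h => hα0 (by simpa [h] using (sum_C_coeffVec_mul_X hα1).symm)
  obtain ⟨c, hc⟩ := exists_smul_eq_of_cross_eq_zero hcoeff hcross
  refine hA.2 β hβ α hα hne.symm c ?_
  rw [← sum_C_coeffVec_mul_X hβ1, ← hc]
  conv_rhs => rw [← sum_C_coeffVec_mul_X hα1]
  simp [Finset.smul_sum, smul_eq_C_mul, mul_assoc]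

theorem cross_eq_zero_of_eval_eq_zero (hA : IsArrangement A) (hα : α ∈ A) (hβ : β ∈ A) (hne : α ≠ β)
    (hαv : eval v α = 0) (hαw : eval w α = 0) (hβv : eval v β = 0) (hβw : eval w β = 0) :
    v ⨯₃ w = 0 := by
  rw [eval_eq_coeffVec_dotProduct (hA.1 α hα).2] at hαv hαw
  rw [eval_eq_coeffVec_dotProduct (hA.1 β hβ).2] at hβv hβw
  exact cross_eq_zero_of_dotProduct_eq_zero (hA.cross_coeffVec_ne_zero hα hβ hne) hαv hαw hβv hβw

theorem exists_ne_zero_eval_eq_zero (hA : IsArrangement A) (hα : α ∈ A) (hβ : β ∈ A)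
    (hne : α ≠ β) : ∃ v : Fin 3 → F, v ≠ 0 ∧ eval v α = 0 ∧ eval v β = 0 := by
  refine ⟨_, hA.cross_coeffVec_ne_zero hα hβ hne, ?_, ?_⟩
  · rw [eval_eq_coeffVec_dotProduct (hA.1 α hα).2, dot_self_cross]
  · rw [eval_eq_coeffVec_dotProduct (hA.1 β hβ).2, dot_cross_self]

theorem hyperplanesThrough_eq_of_eval_eq_zero (hA : IsArrangement A) (hα : α ∈ A) (hβ : β ∈ A)
    (hne : α ≠ β) (hv : v ≠ 0) (hw : w ≠ 0) (hαv : eval v α = 0) (hαw : eval w α = 0)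
    (hβv : eval v β = 0) (hβw : eval w β = 0) :
    hyperplanesThrough A v = hyperplanesThrough A w := by
  obtain ⟨c, rfl⟩ := exists_smul_eq_of_cross_eq_zero hv
    (hA.cross_eq_zero_of_eval_eq_zero hα hβ hne hαv hαw hβv hβw)
  exact (hA.hyperplanesThrough_smul (left_ne_zero_of_smul hw)).symm

end IsArrangement

end Incidence

section Points

variable {F : Type*} [Field F] {A T T' : Finset (MvPolynomial (Fin 3) F)}
  {α β : MvPolynomial (Fin 3) F}

/-- The intersection points of `A`, each encoded, as in `nPoints`, by the set of lines of `A`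
through it. -/
noncomputable def points (A : Finset (MvPolynomial (Fin 3) F)) :
    Finset (Finset (MvPolynomial (Fin 3) F)) :=
  A.powerset.filter fun T => 2 ≤ T.card ∧ ∃ v, v ≠ 0 ∧ T = hyperplanesThrough A v

theorem mem_points :
    T ∈ points A ↔ 2 ≤ T.card ∧ ∃ v, v ≠ 0 ∧ T = hyperplanesThrough A v := by
  refine ⟨fun h => (Finset.mem_filter.mp h).2, fun h => Finset.mem_filter.mpr ⟨?_, h⟩⟩
  obtain ⟨-, v, -, rfl⟩ := h
  exact Finset.mem_powerset.mpr hyperplanesThrough_subset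

theorem subset_of_mem_points (hT : T ∈ points A) : T ⊆ A :=
  Finset.mem_powerset.mp (Finset.mem_filter.mp hT).1

theorem nPoints_eq_card (A : Finset (MvPolynomial (Fin 3) F)) (j : ℕ) :
    nPoints A j = ((points A).filter fun T => T.card = j).card := by
  rw [nPoints, ← Set.ncard_coe_finset]
  congr 1
  ext T
  simp only [Set.mem_ofPred_eq, Finset.coe_filter, mem_points, hyperplanesThrough]
  tauto

theorem nPoints_card_ne_zero (hT : T ∈ points A) : nPoints A T.card ≠ 0 := by
  rw [nPoints_eq_card]
  exact Finset.card_ne_zero_of_mem (Finset.mem_filter.mpr ⟨hT, rfl⟩)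

/-- The intersection points of `A` on the line `α`. -/
noncomputable def pointsOn (A : Finset (MvPolynomial (Fin 3) F)) (α : MvPolynomial (Fin 3) F) :
    Finset (Finset (MvPolynomial (Fin 3) F)) :=
  (points A).filter fun T => α ∈ T

theorem mem_pointsOn : T ∈ pointsOn A α ↔ T ∈ points A ∧ α ∈ T :=
  Finset.mem_filter

namespace IsArrangement

theorem exists_mem_points (hA : IsArrangement A) (hα : α ∈ A) (hβ : β ∈ A) (hne : α ≠ β) :
    ∃ T ∈ points A, α ∈ T ∧ β ∈ T := by
  obtain ⟨v, hv, hαv, hβv⟩ := hA.exists_ne_zero_eval_eq_zero hα hβ hne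
  have hαT : α ∈ hyperplanesThrough A v := mem_hyperplanesThrough.mpr ⟨hα, hαv⟩
  have hβT : β ∈ hyperplanesThrough A v := mem_hyperplanesThrough.mpr ⟨hβ, hβv⟩
  exact ⟨_, mem_points.mpr ⟨Finset.one_lt_card.mpr ⟨α, hαT, β, hβT, hne⟩, v, hv, rfl⟩, hαT, hβT⟩

theorem eq_of_mem_points (hA : IsArrangement A) (hne : α ≠ β) (hT : T ∈ points A)
    (hT' : T' ∈ points A) (hαT : α ∈ T) (hβT : β ∈ T) (hαT' : α ∈ T') (hβT' : β ∈ T') :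
    T = T' := by
  have hα := subset_of_mem_points hT hαT
  have hβ := subset_of_mem_points hT hβT
  obtain ⟨-, v, hv, rfl⟩ := mem_points.mp hT
  obtain ⟨-, w, hw, rfl⟩ := mem_points.mp hT'
  rw [mem_hyperplanesThrough] at hαT hβT hαT' hβT'
  exact hA.hyperplanesThrough_eq_of_eval_eq_zero hα hβ hne hv hw hαT.2 hαT'.2 hβT.2 hβT'.2

theorem sum_card_sub_one_pointsOn (hA : IsArrangement A) (hα : α ∈ A) :
    ∑ T ∈ pointsOn A α, (T.card - 1) = A.card - 1 := by
  have hpartition : (pointsOn A α).biUnion (fun T => T.erase α) = A.erase α := by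
    ext β
    simp only [Finset.mem_biUnion, Finset.mem_erase, mem_pointsOn]
    constructor
    · rintro ⟨T, ⟨hT, -⟩, hβα, hβ⟩
      exact ⟨hβα, subset_of_mem_points hT hβ⟩
    · rintro ⟨hβα, hβ⟩
      obtain ⟨T, hT, hαT, hβT⟩ := hA.exists_mem_points hα hβ hβα.symm
      exact ⟨T, ⟨hT, hαT⟩, hβα, hβT⟩
  rw [← Finset.card_erase_of_mem hα, ← hpartition, Finset.card_biUnion]
  · exact Finset.sum_congr rfl fun T hT => (Finset.card_erase_of_mem (mem_pointsOn.mp hT).2).symm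
  · intro T hT T' hT' hne
    rw [Finset.mem_coe, mem_pointsOn] at hT hT'
    refine Finset.disjoint_left.mpr fun β hβ hβ' => hne ?_
    rw [Finset.mem_erase] at hβ hβ'
    exact hA.eq_of_mem_points hβ.1 hT.1 hT'.1 hβ.2 hT.2 hβ'.2 hT'.2

theorem card_pointsOn_add_card_triples (hA : IsArrangement A) (hα : α ∈ A)
    (hle : ∀ T ∈ points A, T.card ≤ 3) :
    (pointsOn A α).card + ((pointsOn A α).filter fun T => T.card = 3).card = A.card - 1 := by
  rw [← hA.sum_card_sub_one_pointsOn hα, Finset.card_eq_sum_ones, Finset.card_filter,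
    ← Finset.sum_add_distrib]
  refine Finset.sum_congr rfl fun T hT => ?_
  have hT := (mem_pointsOn.mp hT).1
  have := hle T hT
  have := (mem_points.mp hT).1
  split_ifs <;> omega

theorem card_filter_two_le_le_choose (hA : IsArrangement A)
    {P : Finset (Finset (MvPolynomial (Fin 3) F))} (hP : P ⊆ points A) :
    (A.filter fun α => 2 ≤ (P.filter fun T => α ∈ T).card).card ≤ P.card.choose 2 := by
  have hpair : ∀ α ∈ A.filter fun α => 2 ≤ (P.filter fun T => α ∈ T).card,
      ∃ Q ⊆ P.filter fun T => α ∈ T, Q.card = 2 :=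
    fun α hα => Finset.exists_subset_card_eq (Finset.mem_filter.mp hα).2
  choose! Q hQP hQcard using hpair
  rw [← Finset.card_powersetCard]
  refine Finset.card_le_card_of_injOn Q (fun α hα => ?_) fun α hα β hβ hαβ => ?_
  · exact Finset.mem_powersetCard.mpr ⟨(hQP α hα).trans (Finset.filter_subset _ _), hQcard α hα⟩
  · obtain ⟨T, hT, T', hT', hne⟩ := Finset.one_lt_card.mp (hQcard α hα).ge
    have hTα := Finset.mem_filter.mp (hQP α hα hT)
    have hTα' := Finset.mem_filter.mp (hQP α hα hT')
    have hTβ := Finset.mem_filter.mp (hQP β hβ (hαβ ▸ hT))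
    have hTβ' := Finset.mem_filter.mp (hQP β hβ (hαβ ▸ hT'))
    by_contra hαβ
    exact hne (hA.eq_of_mem_points hαβ (hP hTα.1) (hP hTα'.1) hTα.2 hTβ.2 hTα'.2 hTβ'.2)

theorem card_filter_two_le_le_choose_nPoints (hA : IsArrangement A) (j : ℕ) :
    (A.filter fun α => 2 ≤ ((pointsOn A α).filter fun T => T.card = j).card).card ≤
      (nPoints A j).choose 2 := by
  have hcomm (α : MvPolynomial (Fin 3) F) : ((pointsOn A α).filter fun T => T.card = j) =
      ((points A).filter fun T => T.card = j).filter fun T => α ∈ T := Finset.filter_comm ..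
  simp only [hcomm, nPoints_eq_card]
  exact hA.card_filter_two_le_le_choose (Finset.filter_subset _ _)

end IsArrangement

end Points

section EulerCross

variable {R : Type*} [CommRing R]

theorem mul_comm_of_cross_eq_zero {v w : Fin 3 → R} (h : v ⨯₃ w = 0)
    (i j : Fin 3) : v i * w j = v j * w i := by
  have h0 := congrFun h 0
  have h1 := congrFun h 1
  have h2 := congrFun h 2
  simp only [cross_apply, Matrix.cons_val, Pi.zero_apply] at h0 h1 h2
  fin_cases i <;> fin_cases j <;> simp only [Fin.mk_one, Fin.zero_eta, Fin.reduceFinMk] <;> grind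

theorem eval_X_cross (θ : Fin 3 → MvPolynomial (Fin 3) R) (v : Fin 3 → R) (i : Fin 3) :
    eval v ((X ⨯₃ θ) i) = (v ⨯₃ fun j => eval v (θ j)) i := by
  fin_cases i <;> simp [cross_apply]

theorem isHomogeneous_X_cross {θ : Fin 3 → MvPolynomial (Fin 3) R} {e : ℕ}
    (hθ : ∀ j, (θ j).IsHomogeneous e) (i : Fin 3) :
    ((X ⨯₃ θ) i).IsHomogeneous (e + 1) := by
  have hterm (j k : Fin 3) : (X j * θ k).IsHomogeneous (e + 1) :=
    add_comm 1 e ▸ (isHomogeneous_X R j).mul (hθ k)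
  fin_cases i <;> exact (hterm _ _).sub (hterm _ _)

end EulerCross

section LowerBound

variable {F : Type*} [Field F] {A G : Finset (MvPolynomial (Fin 3) F)}
  {θ : Fin 3 → MvPolynomial (Fin 3) F} {α p : MvPolynomial (Fin 3) F} {m e : ℕ}

theorem X_cross_eq_zero_of_forall_dvd (hp : p.IsHomogeneous m) (hp0 : p ≠ 0)
    (hθ : ∀ j, (θ j).IsHomogeneous e) (hem : e < m) (hdvd : ∀ i, p ∣ (X ⨯₃ θ) i) :
    X ⨯₃ θ = 0 := by
  have hmultiple (i : Fin 3) : ∃ c : F, (X ⨯₃ θ) i = C c * p :=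
    exists_eq_C_mul_of_isHomogeneous_of_dvd hp (isHomogeneous_X_cross hθ i) hem (hdvd i)
  choose c hc using hmultiple
  have hsum : (∑ i, (X i * C (c i) : MvPolynomial (Fin 3) F)) * p = 0 := by
    calc (∑ i, (X i * C (c i) : MvPolynomial (Fin 3) F)) * p = X ⬝ᵥ (X ⨯₃ θ) := by
          simp only [dotProduct, hc, Finset.sum_mul, mul_assoc]
      _ = 0 := dot_self_cross X θ
  have hc0 := eq_zero_of_sum_X_mul_C_eq_zero ((mul_eq_zero_iff_right hp0).mp hsum)
  funext i
  rw [hc, hc0, Pi.zero_apply, C_0, zero_mul, Pi.zero_apply]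

namespace IsArrangement

theorem eval_X_cross_eq_zero (hA : IsArrangement A) (hθQ : applyDer θ (Qpoly A) = 0)
    {β : MvPolynomial (Fin 3) F} (hα : α ∈ A) (hβ : β ∈ A) (hne : α ≠ β) {v : Fin 3 → F}
    (hαv : eval v α = 0) (hβv : eval v β = 0) (i : Fin 3) : eval v ((X ⨯₃ θ) i) = 0 := by
  rw [eval_X_cross, hA.cross_eq_zero_of_eval_eq_zero hα hβ hne hαv
    (hA.eval_applyDer_eq_zero hθQ hα hαv) hβv (hA.eval_applyDer_eq_zero hθQ hβ hβv), Pi.zero_apply]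

theorem dvd_X_cross [Infinite F] (hA : IsArrangement A) (hθ : ∀ j, (θ j).IsHomogeneous e)
    (hθQ : applyDer θ (Qpoly A) = 0) (hα : α ∈ A) (hcard : e + 1 < (pointsOn A α).card)
    (i : Fin 3) : α ∣ (X ⨯₃ θ) i := by
  have hother : ∀ T ∈ pointsOn A α, ∃ β ∈ T, β ≠ α := fun T hT =>
    Finset.exists_mem_ne (mem_points.mp (mem_pointsOn.mp hT).1).1 α
  choose! β hβT hβα using hother
  have hβA : ∀ T ∈ pointsOn A α, β T ∈ A := fun T hT =>
    subset_of_mem_points (mem_pointsOn.mp hT).1 (hβT T hT)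
  refine dvd_of_forall_eval_eq_zero_of_card_lt (β := β) (hA.1 α hα).2 (hA.1 α hα).1
    (fun T hT => (hA.1 _ (hβA T hT)).2) (isHomogeneous_X_cross hθ i) hcard ?_
    fun T hT v hαv hβv =>
      hA.eval_X_cross_eq_zero hθQ hα (hβA T hT) (hβα T hT).symm hαv hβv i
  intro T hT T' hT' hne
  obtain ⟨hTA, hαT⟩ := mem_pointsOn.mp hT
  obtain ⟨hTA', hαT'⟩ := mem_pointsOn.mp hT'
  obtain ⟨v, -, hTv⟩ := (mem_points.mp hTA).2
  have hmem {γ : MvPolynomial (Fin 3) F} : γ ∈ T ↔ γ ∈ A ∧ eval v γ = 0 := by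
    rw [hTv, mem_hyperplanesThrough]
  refine ⟨v, (hmem.mp hαT).2, (hmem.mp (hβT T hT)).2, fun hv => hne ?_⟩
  have hβT' : β T' ∈ T := hmem.mpr ⟨hβA T' hT', hv⟩
  exact hA.eq_of_mem_points (hβα T' hT').symm hTA hTA' hαT hβT' hαT' (hβT T' hT')

theorem eq_zero_of_card_lt_card_pointsOn [CharZero F] (hA : IsArrangement A)
    (hθ : ∀ j, (θ j).IsHomogeneous e) (hθQ : applyDer θ (Qpoly A) = 0) (hGA : G ⊆ A)
    (hG : e < G.card) (hcard : ∀ α ∈ G, e + 1 < (pointsOn A α).card) : θ = 0 := by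
  have hdvd (i : Fin 3) : ∏ α ∈ G, α ∣ (X ⨯₃ θ) i :=
    Finset.prod_dvd_of_isRelPrime
      (fun α hα β hβ hne => hA.isRelPrime (hGA hα) (hGA hβ) hne)
      fun α hα => hA.dvd_X_cross hθ hθQ (hGA hα) (hcard α hα) i
  have hcross : X ⨯₃ θ = 0 :=
    X_cross_eq_zero_of_forall_dvd (hA.isHomogeneous_prod hGA) (hA.prod_ne_zero hGA) hθ hG hdvd
  exact eq_zero_of_applyDer_eq_zero_of_X_mul_comm (hA.isHomogeneous_prod subset_rfl)
    (hA.prod_ne_zero subset_rfl) ((Nat.zero_le e).trans_lt hG |>.trans_le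
      (Finset.card_le_card hGA)).ne' hθQ (mul_comm_of_cross_eq_zero hcross)

end IsArrangement

end LowerBound

section MinimalDegree

variable {F : Type*} [Field F] [CharZero F] {A T : Finset (MvPolynomial (Fin 3) F)}

namespace IsArrangement

theorem mdr_eq_card_sub_card (hA : IsArrangement A) (hT : T ∈ points A)
    (hfew : (A.filter fun α => (pointsOn A α).card + T.card ≤ A.card).card ≤ T.card) :
    mdr A = A.card - T.card := by
  have hne : A.Nonempty := (Finset.card_pos.mp (two_pos.trans_le (mem_points.mp hT).1)).mono
    (subset_of_mem_points hT)
  obtain ⟨v, hv, hTv⟩ := (mem_points.mp hT).2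
  have hrelation : A.card - T.card ∈ {r | ∃ θ : Fin 3 → MvPolynomial (Fin 3) F, θ ≠ 0 ∧
      (∀ j, (θ j).IsHomogeneous r) ∧ applyDer θ (Qpoly A) = 0} := by
    rw [hTv]
    exact ⟨pointRelation A v, hA.pointRelation_ne_zero hne hv, hA.isHomogeneous_pointRelation v,
      hA.applyDer_pointRelation v⟩
  refine le_antisymm (Nat.sInf_le hrelation) (le_csInf ⟨_, hrelation⟩ ?_)
  rintro r ⟨θ, hθ0, hθ, hθQ⟩
  by_contra! hr
  have hsplit := Finset.card_filter_add_card_filter_not (s := A)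
    fun α => (pointsOn A α).card + T.card ≤ A.card
  refine hθ0 (hA.eq_zero_of_card_lt_card_pointsOn hθ hθQ (Finset.filter_subset
    (fun α => ¬(pointsOn A α).card + T.card ≤ A.card) A) (by omega) fun α hα => ?_)
  have := (Finset.mem_filter.mp hα).2
  omega

theorem mdr_eq_card_sub_two (hA : IsArrangement A) (hd : 2 ≤ A.card)
    (hdouble : ∀ T ∈ points A, T.card = 2) : mdr A = A.card - 2 := by
  have hcard : ∀ α ∈ A, (pointsOn A α).card = A.card - 1 := by
    intro α hα
    rw [← hA.sum_card_sub_one_pointsOn hα, Finset.card_eq_sum_ones]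
    exact Finset.sum_congr rfl fun T hT => by rw [hdouble T (mem_pointsOn.mp hT).1]
  obtain ⟨α, hα, β, hβ, hne⟩ := Finset.one_lt_card.mp hd
  obtain ⟨T, hT, -⟩ := hA.exists_mem_points hα hβ hne
  have hnone : A.filter (fun α => (pointsOn A α).card + T.card ≤ A.card) = ∅ := by
    refine Finset.filter_false_of_mem fun γ hγ => ?_
    rw [hcard γ hγ, hdouble T hT]
    omega
  rw [← hdouble T hT]
  exact hA.mdr_eq_card_sub_card hT (by simp only [hnone, Finset.card_empty, Nat.zero_le])

theorem mdr_eq_card_sub_three (hA : IsArrangement A) (hle : ∀ T ∈ points A, T.card ≤ 3)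
    (hT : T ∈ points A) (hT3 : T.card = 3)
    (hfew : (A.filter fun α => 2 ≤ ((pointsOn A α).filter fun T => T.card = 3).card).card ≤ 3) :
    mdr A = A.card - 3 := by
  rw [hA.mdr_eq_card_sub_card hT, hT3]
  refine (Finset.card_le_card fun α hα => ?_).trans (hfew.trans hT3.ge)
  obtain ⟨hα, hpoor⟩ := Finset.mem_filter.mp hα
  have := hA.card_pointsOn_add_card_triples hα hle
  exact Finset.mem_filter.mpr ⟨hα, by omega⟩

end IsArrangement

theorem mdr_double_triple_general (A : Finset (MvPolynomial (Fin 3) F)) (hA : IsArrangement A)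
    (hd : 2 ≤ A.card) (honly : ∀ j, 4 ≤ j → nPoints A j = 0) :
    (nPoints A 3 = 0 → mdr A = A.card - 2) ∧
    (1 ≤ nPoints A 3 →
      (A.filter fun α => 2 ≤ ((pointsOn A α).filter fun T => T.card = 3).card).card ≤ 3 →
      mdr A = A.card - 3) := by
  have hle : ∀ T ∈ points A, T.card ≤ 3 := fun T hT =>
    not_lt.mp fun h => nPoints_card_ne_zero hT (honly _ h)
  refine ⟨fun hn => hA.mdr_eq_card_sub_two hd fun T hT => ?_, fun hn hfew => ?_⟩
  · have hne3 : T.card ≠ 3 := fun h => nPoints_card_ne_zero hT (by rwa [h])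
    have := hle T hT
    have := (mem_points.mp hT).1
    omega
  · rw [nPoints_eq_card] at hn
    obtain ⟨T, hT⟩ := Finset.card_pos.mp hn
    obtain ⟨hT, hT3⟩ := Finset.mem_filter.mp hT
    exact hA.mdr_eq_card_sub_three hle hT hT3 hfew

end MinimalDegree

/-- Let `A` be an essential line arrangement of `d ≥ 2` lines in `P^2`
having only double and triple intersection points (`n_j(A) = 0` for all `j ≥ 4`), with
`n_3 = n_3(A)` triple points. Then:
(1) if `n_3 = 0`, then `r(A) = d − 2`;
(2) if `1 ≤ n_3 ≤ 3`, then `r(A) = d − 3`. -/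
theorem mdr_double_triple (A : Finset (MvPolynomial (Fin 3) K))
    (hA : IsArrangement A) (hAess : IsEssential A) (hd : 2 ≤ A.card)
    (honly : ∀ j, 4 ≤ j → nPoints A j = 0) :
    (nPoints A 3 = 0 → mdr A = A.card - 2) ∧
    (1 ≤ nPoints A 3 → nPoints A 3 ≤ 3 → mdr A = A.card - 3) := by
  obtain ⟨hdouble, htriple⟩ := mdr_double_triple_general A hA hd honly
  exact ⟨hdouble, fun hn hn3 => htriple hn
    ((hA.card_filter_two_le_le_choose_nPoints 3).trans (Nat.choose_le_choose 2 hn3))⟩
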